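/- Fix A_* > 0 and define the linear operator dS(0,0)[α,β] := 2π Σ_{k≠0} [ J₁'(kA_*) α̂(k) − i J₁(kA_*) β̂(k) ] e^{ikx}. Then: (i) for every s ∈ ℝ, dS(0,0) is a bounded map H^{s−1/2}(𝕋) × H^{s−1/2}(𝕋) → H^s_0(𝕋); (ii) its kernel consists exactly of the pairs (α,β) with J₁'(kA_*)α̂(k) − iJ₁(kA_*)β̂(k) = 0 for all k ≠ 0; (iii) the operator R(0,0)[γ] := (1/2π) ( Σ_{j≠0} [J₁'(jA_*)/(J₁(jA_*)² + J₁'(jA_*)²)] γ̂(j) e^{ijx} , i Σ_{j≠0} [J₁(jA_*)/(J₁(jA_*)² + J₁'(jA_*)²)] γ̂(j) e^{ijx} ) is a bounded map H^{s+1/2}_0(𝕋) → H^s(𝕋) × H^s(𝕋) and is a right inverse of dS(0,0), i.e. dS(0,0)∘R(0,0) = Id on H^{s+1/2}_0(𝕋). -/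

import Mathlib

/-!
The statement reduces to a two-sided estimate `J₁(kA)² + J₁'(kA)² ≍ 1 / |k|` for integers `k ≠ 0`:
the upper bound says that the symbol of `dS(0,0)` gains half a derivative, the lower bound that the
symbol of `R(0,0)` loses at most half a derivative, and the identity `dS(0,0) ∘ R(0,0) = Id` is
algebra once `J₁² + J₁'² ≠ 0` (`dS0_bound`, `R0_bound`, `dS0_R0`).

The estimate comes from Bessel's equation, which is obtained by differentiating the defining
integral (`besselInt_ode`). The function `u = √θ J₁(θ)` solves `u'' + (1 - 3 / (4θ²)) u = 0` on
`(0, ∞)`, so its energy `E = u² + u'²` satisfies `|E'| ≤ 3 / (4θ²) E`. By Grönwall, `E` stays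
between two positive multiples of `E(a)` on `[a, ∞)` (`besselEnergy_bounds`), while
`E ≍ θ (J₁² + J₁'²)` (`energy_comparable`). Because `J₁'(0) = 1 / 2`, some small `a > 0` has
`J₁(a) ≠ 0`, hence `E(a) > 0`. Negative `k` are covered by the parities of `J₁` and `J₁'`.
-/

open scoped Real BigOperators
open MeasureTheory

noncomputable section

def jb (j : ℤ) : ℝ := max 1 |(j : ℝ)|

def fc (u : ℝ → ℂ) (j : ℤ) : ℂ :=
  (1 / (2 * (π : ℂ))) * ∫ x in (0:ℝ)..(2 * π), u x * Complex.exp (-Complex.I * (j : ℂ) * (x : ℂ))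

def fcR (u : ℝ → ℝ) (j : ℤ) : ℂ := fc (fun x => (u x : ℂ)) j

def sobNorm (s : ℝ) (u : ℝ → ℂ) : ℝ :=
  Real.sqrt (∑' j : ℤ, jb j ^ (2 * s) * ‖fc u j‖ ^ 2)

def memHs (s : ℝ) (u : ℝ → ℂ) : Prop :=
  Summable (fun j : ℤ => jb j ^ (2 * s) * ‖fc u j‖ ^ 2)

def sobNormR (s : ℝ) (u : ℝ → ℝ) : ℝ := sobNorm s (fun x => (u x : ℂ))
def memHsR (s : ℝ) (u : ℝ → ℝ) : Prop := memHs s (fun x => (u x : ℂ))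

def pairNorm (s : ℝ) (a b : ℝ → ℝ) : ℝ := sobNormR s a + sobNormR s b

def seqNorm (s : ℝ) (c : ℤ → ℂ) : ℝ :=
  Real.sqrt (∑' j : ℤ, jb j ^ (2 * s) * ‖c j‖ ^ 2)

def memSeq (s : ℝ) (c : ℤ → ℂ) : Prop :=
  Summable (fun j : ℤ => jb j ^ (2 * s) * ‖c j‖ ^ 2)

def smoothPer (u : ℝ → ℝ) : Prop :=
  ContDiff ℝ (⊤ : ℕ∞) u ∧ Function.Periodic u (2 * π)

def J1 (θ : ℝ) : ℝ :=
  ((1 / (2 * (π : ℂ))) * ∫ φ in (0:ℝ)..(2 * π),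
    Complex.exp (Complex.I * (θ : ℂ) * (Real.sin φ : ℂ)) * Complex.exp (-Complex.I * (φ : ℂ))).re

/-- The operator dS(0,0) at the trivial Zoll pair, on Fourier coefficients. -/
def dS0 (Astar : ℝ) (α β : ℤ → ℂ) (k : ℤ) : ℂ :=
  if k = 0 then 0 else
    2 * (π : ℂ) * (((deriv J1 ((k : ℝ) * Astar) : ℝ) : ℂ) * α k
      - Complex.I * ((J1 ((k : ℝ) * Astar) : ℝ) : ℂ) * β k)

/-- The right inverse R(0,0) of dS(0,0), on Fourier coefficients. -/
def R0 (Astar : ℝ) (γ : ℤ → ℂ) : (ℤ → ℂ) × (ℤ → ℂ) :=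
  (fun j => if j = 0 then 0 else
      (1 / (2 * (π : ℂ))) *
        ((deriv J1 ((j : ℝ) * Astar)
            / (J1 ((j : ℝ) * Astar) ^ 2 + deriv J1 ((j : ℝ) * Astar) ^ 2) : ℝ) : ℂ) * γ j,
   fun j => if j = 0 then 0 else
      Complex.I * (1 / (2 * (π : ℂ))) *
        ((J1 ((j : ℝ) * Astar)
            / (J1 ((j : ℝ) * Astar) ^ 2 + deriv J1 ((j : ℝ) * Astar) ^ 2) : ℝ) : ℂ) * γ j)

/-! ### Integral formulas and Bessel's equation -/

/-- The parametric integrals `∫₀^{2π} sinⁿ φ cos (θ sin φ - φ + c) dφ`. Up to the factor `1 / (2π)`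
these are `J₁` (for `n = c = 0`) and, with `c = n π / 2`, its derivatives. -/
def besselInt (n : ℕ) (c θ : ℝ) : ℝ :=
  ∫ φ in (0:ℝ)..(2 * π), Real.sin φ ^ n * Real.cos (θ * Real.sin φ - φ + c)

lemma hasDerivAt_besselInt (n : ℕ) (c θ : ℝ) :
    HasDerivAt (besselInt n c) (besselInt (n + 1) (c + π / 2) θ) θ := by
  have key := intervalIntegral.hasDerivAt_integral_of_dominated_loc_of_deriv_le
    (μ := volume) (a := 0) (b := 2 * π) (s := Set.univ) (x₀ := θ) (bound := fun _ => (1 : ℝ))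
    (F := fun t φ => Real.sin φ ^ n * Real.cos (t * Real.sin φ - φ + c))
    (F' := fun t φ => Real.sin φ ^ (n + 1) * Real.cos (t * Real.sin φ - φ + (c + π / 2)))
    Filter.univ_mem
    (Filter.Eventually.of_forall fun t => Continuous.aestronglyMeasurable (by fun_prop))
    (Continuous.intervalIntegrable (by fun_prop) _ _)
    (Continuous.aestronglyMeasurable (by fun_prop))
    (Filter.Eventually.of_forall fun φ _ t _ => by
      rw [norm_mul, norm_pow, Real.norm_eq_abs, Real.norm_eq_abs]
      exact mul_le_one₀ (pow_le_one₀ (abs_nonneg _) (Real.abs_sin_le_one _)) (abs_nonneg _)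
        (Real.abs_cos_le_one _))
    (Continuous.intervalIntegrable (by fun_prop) _ _)
    (Filter.Eventually.of_forall fun φ _ t _ => by
      have h1 : HasDerivAt (fun t : ℝ => t * Real.sin φ - φ + c) (Real.sin φ) t := by
        simpa using (((hasDerivAt_id t).mul_const (Real.sin φ)).sub_const φ).add_const c
      refine (h1.cos.const_mul (Real.sin φ ^ n)).congr_deriv ?_
      rw [← add_assoc, Real.cos_add_pi_div_two]
      ring)
  exact key.2

lemma J1_eq (θ : ℝ) : J1 θ = (2 * π)⁻¹ * besselInt 0 0 θ := by
  have h := Complex.reCLM.intervalIntegral_comp_comm (μ := volume) (a := 0) (b := 2 * π)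
    (f := fun φ : ℝ => Complex.exp (Complex.I * (θ : ℂ) * (Real.sin φ : ℂ)) *
      Complex.exp (-Complex.I * (φ : ℂ)))
    (Continuous.intervalIntegrable (by fun_prop) _ _)
  have h2 : (1 / (2 * (π : ℂ))) = (((2 * π)⁻¹ : ℝ) : ℂ) := by push_cast; simp
  unfold J1 besselInt
  rw [h2, Complex.re_ofReal_mul]
  congr 1
  refine h.symm.trans ?_
  congr 1
  ext φ
  rw [← Complex.exp_add]
  have h3 : Complex.I * (θ : ℂ) * (Real.sin φ : ℂ) + -Complex.I * (φ : ℂ)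
      = ((θ * Real.sin φ - φ + 0 : ℝ) : ℂ) * Complex.I := by push_cast; ring
  rw [h3, Complex.reCLM_apply, Complex.exp_ofReal_mul_I_re]
  simp

lemma hasDerivAt_J1 (θ : ℝ) : HasDerivAt J1 ((2 * π)⁻¹ * besselInt 1 (π / 2) θ) θ := by
  have h := (hasDerivAt_besselInt 0 0 θ).const_mul (2 * π)⁻¹
  rw [zero_add, zero_add] at h
  exact h.congr_of_eventuallyEq (Filter.Eventually.of_forall J1_eq)

lemma deriv_J1 (θ : ℝ) : deriv J1 θ = (2 * π)⁻¹ * besselInt 1 (π / 2) θ :=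
  (hasDerivAt_J1 θ).deriv

/-- Bessel's equation of order one. The integrand of the left-hand side is the `φ`-derivative of the
`2π`-periodic function `(θ cos φ + 1) sin (θ sin φ - φ)`. -/
lemma besselInt_ode (θ : ℝ) :
    θ ^ 2 * besselInt 2 π θ + θ * besselInt 1 (π / 2) θ + (θ ^ 2 - 1) * besselInt 0 0 θ = 0 := by
  have hF : ∀ φ ∈ Set.uIcc 0 (2 * π), HasDerivAt
      (fun φ : ℝ => (θ * Real.cos φ + 1) * Real.sin (θ * Real.sin φ - φ))
      (θ ^ 2 * (Real.sin φ ^ 2 * Real.cos (θ * Real.sin φ - φ + π))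
        + θ * (Real.sin φ ^ 1 * Real.cos (θ * Real.sin φ - φ + π / 2))
        + (θ ^ 2 - 1) * (Real.sin φ ^ 0 * Real.cos (θ * Real.sin φ - φ + 0))) φ := by
    intro φ _
    have h1 : HasDerivAt (fun φ : ℝ => θ * Real.cos φ + 1) (θ * -Real.sin φ) φ :=
      ((Real.hasDerivAt_cos φ).const_mul θ).add_const 1
    have h2 : HasDerivAt (fun φ : ℝ => θ * Real.sin φ - φ) (θ * Real.cos φ - 1) φ :=
      ((Real.hasDerivAt_sin φ).const_mul θ).sub (hasDerivAt_id φ)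
    refine (h1.mul h2.sin).congr_deriv ?_
    rw [Real.cos_add_pi, Real.cos_add_pi_div_two, add_zero, Real.sin_sq]
    ring
  have hint := intervalIntegral.integral_eq_sub_of_hasDerivAt hF
    (Continuous.intervalIntegrable (by fun_prop) _ _)
  rw [intervalIntegral.integral_add (Continuous.intervalIntegrable (by fun_prop) _ _)
      (Continuous.intervalIntegrable (by fun_prop) _ _),
    intervalIntegral.integral_add (Continuous.intervalIntegrable (by fun_prop) _ _)
      (Continuous.intervalIntegrable (by fun_prop) _ _)] at hint
  simp only [intervalIntegral.integral_const_mul] at hint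
  refine hint.trans ?_
  simp

lemma hasDerivAt_mul_deriv_J1 {θ : ℝ} (hθ : 0 < θ) :
    HasDerivAt (fun t => t * deriv J1 t) ((1 / θ - θ) * J1 θ) θ := by
  have h := (hasDerivAt_besselInt 1 (π / 2) θ).const_mul (2 * π)⁻¹
  rw [add_halves] at h
  have h' : HasDerivAt (deriv J1) _ θ :=
    h.congr_of_eventuallyEq (Filter.Eventually.of_forall deriv_J1)
  refine ((hasDerivAt_id θ).mul h').congr_deriv ?_
  rw [deriv_J1, J1_eq, id]
  have ode := besselInt_ode θ
  have hπ := Real.pi_pos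
  field_simp
  linear_combination ode

lemma J1_neg (θ : ℝ) : J1 (-θ) = -J1 θ := by
  have hper : Function.Periodic
      (fun φ : ℝ => Real.sin φ ^ 0 * Real.cos (-θ * Real.sin φ - φ + 0)) (2 * π) := by
    intro φ
    have : -θ * Real.sin φ - (φ + 2 * π) + 0 = (-θ * Real.sin φ - φ + 0) - 2 * π := by ring
    simp only [Real.sin_add_two_pi, this, Real.cos_sub_two_pi]
  have h := hper.intervalIntegral_add_eq π 0
  have h2 := intervalIntegral.integral_comp_add_right (a := 0) (b := 2 * π)
    (fun φ : ℝ => Real.sin φ ^ 0 * Real.cos (-θ * Real.sin φ - φ + 0)) π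
  rw [zero_add] at h h2
  rw [add_comm π, ← h2] at h
  rw [J1_eq, J1_eq, ← mul_neg]
  congr 1
  unfold besselInt
  rw [← h, ← intervalIntegral.integral_neg]
  congr 1
  ext φ
  have : -θ * Real.sin (φ + π) - (φ + π) + 0 = (θ * Real.sin φ - φ + 0) - π := by
    rw [Real.sin_add_pi]; ring
  rw [this, Real.cos_sub_pi]
  ring

lemma deriv_J1_neg (θ : ℝ) : deriv J1 (-θ) = deriv J1 θ := by
  have h : (fun t => J1 (-t)) = fun t => -J1 t := funext J1_neg
  have h2 := congrArg (fun f => deriv f θ) h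
  simp only [deriv_comp_neg, deriv.fun_neg] at h2
  linarith

lemma deriv_J1_zero : deriv J1 0 = 1 / 2 := by
  have hπ := Real.pi_pos
  have h : besselInt 1 (π / 2) 0 = ∫ φ in (0:ℝ)..(2 * π), Real.sin φ ^ 2 := by
    unfold besselInt
    congr 1
    ext φ
    rw [Real.cos_add_pi_div_two, zero_mul, zero_sub, Real.sin_neg]
    ring
  rw [deriv_J1, h, integral_sin_sq]
  simp
  field_simp

/-- As `J₁'(0) ≠ 0`, the function `J₁` has non-zeros arbitrarily close to `0` on the right. -/
lemma exists_J1_ne_zero {A : ℝ} (hA : 0 < A) : ∃ a, 0 < a ∧ a < A ∧ J1 a ≠ 0 := by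
  have h0 : HasDerivAt J1 (1 / 2) 0 := by
    rw [← deriv_J1_zero]
    exact (hasDerivAt_J1 0).differentiableAt.hasDerivAt
  have h1 : ∀ᶠ z in nhdsWithin (0:ℝ) (Set.Ioi 0), J1 z ≠ 0 :=
    (h0.eventually_ne (c := 0) (by norm_num)).filter_mono
      (nhdsWithin_mono _ fun z hz => ne_of_gt hz)
  obtain ⟨a, ha, ha'⟩ := (h1.and (Ioo_mem_nhdsGT hA)).exists
  exact ⟨a, ha'.1, ha'.2, ha⟩

/-! ### The energy estimate -/

/-- The energy `u² + u'²` of `u = √θ J₁(θ)`, which solves `u'' + (1 - 3 / (4θ²)) u = 0`. It is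
written without square roots. -/
def besselEnergy (θ : ℝ) : ℝ :=
  θ * J1 θ ^ 2 + (θ * deriv J1 θ + J1 θ / 2) ^ 2 / θ

lemma besselEnergy_nonneg {θ : ℝ} (hθ : 0 < θ) : 0 ≤ besselEnergy θ := by
  unfold besselEnergy; positivity

lemma hasDerivAt_besselEnergy {θ : ℝ} (hθ : 0 < θ) :
    HasDerivAt besselEnergy (3 / 2 * (θ * deriv J1 θ + J1 θ / 2) * J1 θ / θ ^ 2) θ := by
  have hy : HasDerivAt J1 (deriv J1 θ) θ := (hasDerivAt_J1 θ).differentiableAt.hasDerivAt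
  have hv := hasDerivAt_mul_deriv_J1 hθ
  have hw := hv.add (hy.div_const 2)
  have h := ((hasDerivAt_id θ).mul (hy.pow 2)).add
    ((hw.pow 2).div (hasDerivAt_id θ) hθ.ne')
  refine h.congr_deriv ?_
  simp
  field_simp
  ring

lemma abs_deriv_besselEnergy_le {θ : ℝ} (hθ : 0 < θ) :
    |3 / 2 * (θ * deriv J1 θ + J1 θ / 2) * J1 θ / θ ^ 2| ≤ 3 / (4 * θ ^ 2) * besselEnergy θ := by
  set y := J1 θ with hy
  set w := θ * deriv J1 θ + y / 2 with hw
  have hE : besselEnergy θ = θ * y ^ 2 + w ^ 2 / θ := rfl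
  have key : |w * y| ≤ besselEnergy θ / 2 := by
    have e1 : besselEnergy θ / 2 - w * y = (θ * y - w) ^ 2 / (2 * θ) := by
      rw [hE]; field_simp; ring
    have e2 : besselEnergy θ / 2 + w * y = (θ * y + w) ^ 2 / (2 * θ) := by
      rw [hE]; field_simp; ring
    have p1 : 0 ≤ (θ * y - w) ^ 2 / (2 * θ) := by positivity
    have p2 : 0 ≤ (θ * y + w) ^ 2 / (2 * θ) := by positivity
    rw [abs_le]
    constructor <;> linarith
  have e3 : 3 / 2 * w * y / θ ^ 2 = 3 / (2 * θ ^ 2) * (w * y) := by field_simp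
  rw [e3, abs_mul, abs_of_pos (by positivity)]
  calc 3 / (2 * θ ^ 2) * |w * y| ≤ 3 / (2 * θ ^ 2) * (besselEnergy θ / 2) := by gcongr
    _ = 3 / (4 * θ ^ 2) * besselEnergy θ := by field_simp; ring

/-- Grönwall bounds for the energy: `|E'| ≤ 3 / (4θ²) E` and `3 / (4θ²)` is integrable at infinity,
so `E` stays between two positive multiples of any of its earlier values. -/
lemma besselEnergy_bounds {a θ : ℝ} (ha : 0 < a) (hθ : a ≤ θ) :
    besselEnergy a * Real.exp (-(3 / (4 * a))) ≤ besselEnergy θ ∧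
      besselEnergy θ ≤ besselEnergy a * Real.exp (3 / (4 * a)) := by
  have hexp : ∀ t : ℝ, 0 < t → HasDerivAt (fun t : ℝ => 3 / (4 * t)) (-(3 / (4 * t ^ 2))) t := by
    intro t ht
    refine (((hasDerivAt_id t).const_mul 4).fun_inv (by simpa using ht.ne')
      |>.const_mul 3).congr_deriv ?_
    simp
    field_simp
  have pos : ∀ t ∈ Set.Ici a, 0 < t := fun t ht => ha.trans_le ht
  have hlow : ∀ t, 0 < t → HasDerivAt (fun t => besselEnergy t * Real.exp (-(3 / (4 * t)))) _ t :=
    fun t ht => (hasDerivAt_besselEnergy ht).mul (hexp t ht).fun_neg.exp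
  have hupp : ∀ t, 0 < t → HasDerivAt (fun t => besselEnergy t * Real.exp (3 / (4 * t))) _ t :=
    fun t ht => (hasDerivAt_besselEnergy ht).mul (hexp t ht).exp
  have hθ0 : 0 < θ := ha.trans_le hθ
  have hq : 0 ≤ 3 / (4 * θ) := by positivity
  constructor
  · have mono := monotoneOn_of_hasDerivWithinAt_nonneg (convex_Ici a)
      (fun t ht => (hlow t (pos t ht)).continuousAt.continuousWithinAt)
      (fun t ht => (hlow t (pos t (interior_subset ht))).hasDerivWithinAt)
      (fun t ht => by
        have ht0 := pos t (interior_subset ht)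
        have hb := (abs_le.1 (abs_deriv_besselEnergy_le ht0)).1
        have he := Real.exp_pos (-(3 / (4 * t)))
        nlinarith)
    refine (mono Set.self_mem_Ici hθ hθ).trans ?_
    exact mul_le_of_le_one_right (besselEnergy_nonneg hθ0) (Real.exp_le_one_iff.2 (by linarith))
  · have anti := antitoneOn_of_hasDerivWithinAt_nonpos (convex_Ici a)
      (fun t ht => (hupp t (pos t ht)).continuousAt.continuousWithinAt)
      (fun t ht => (hupp t (pos t (interior_subset ht))).hasDerivWithinAt)
      (fun t ht => by
        have ht0 := pos t (interior_subset ht)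
        have hb := (abs_le.1 (abs_deriv_besselEnergy_le ht0)).2
        have he := Real.exp_pos (3 / (4 * t))
        nlinarith)
    refine le_trans ?_ (anti Set.self_mem_Ici hθ hθ)
    exact le_mul_of_one_le_right (besselEnergy_nonneg hθ0) (Real.one_le_exp hq)

/-- On `[A, ∞)` the quantity `θ (J₁² + J₁'²)` is comparable to the energy. -/
lemma energy_comparable {A θ : ℝ} (hA : 0 < A) (hθ : A ≤ θ) :
    θ * (J1 θ ^ 2 + deriv J1 θ ^ 2) ≤ (3 + 1 / A ^ 2) * besselEnergy θ ∧
      besselEnergy θ ≤ (3 + 1 / A ^ 2) * (θ * (J1 θ ^ 2 + deriv J1 θ ^ 2)) := by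
  have hθ0 : 0 < θ := hA.trans_le hθ
  set y := J1 θ
  set p := deriv J1 θ
  set q := 1 / (2 * θ) with hq
  have hE : besselEnergy θ = θ * (y ^ 2 + (p + q * y) ^ 2) := by
    change θ * y ^ 2 + (θ * p + y / 2) ^ 2 / θ = _
    rw [hq]; field_simp
  have hq2 : 4 * q ^ 2 ≤ 1 / A ^ 2 := by
    have : 4 * q ^ 2 = 1 / θ ^ 2 := by rw [hq]; field_simp; norm_num
    rw [this]
    gcongr
  set B := 1 / A ^ 2
  have hB : 0 ≤ B := by positivity
  have h1 : q ^ 2 * y ^ 2 ≤ B / 4 * y ^ 2 := by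
    have := sq_nonneg y
    gcongr
    linarith
  have h2 : 0 ≤ B * (p + q * y) ^ 2 := by positivity
  have h3 : 0 ≤ B * p ^ 2 := by positivity
  have h4 : 0 ≤ B * y ^ 2 := by positivity
  rw [hE, mul_left_comm _ θ, mul_left_comm _ θ]
  constructor
  · refine mul_le_mul_of_nonneg_left ?_ hθ0.le
    nlinarith [sq_nonneg (p + 2 * q * y), sq_nonneg y]
  · refine mul_le_mul_of_nonneg_left ?_ hθ0.le
    nlinarith [sq_nonneg (p - q * y), sq_nonneg y, sq_nonneg p]

/-- The two-sided decay `J₁² + J₁'² ≍ 1 / |k|` along the lattice `A ℤ \ {0}`. -/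
lemma J1_lattice_bounds {A : ℝ} (hA : 0 < A) : ∃ c C : ℝ, 0 < c ∧ 0 < C ∧ ∀ k : ℤ, k ≠ 0 →
    c ≤ jb k * (J1 (k * A) ^ 2 + deriv J1 (k * A) ^ 2) ∧
      jb k * (J1 (k * A) ^ 2 + deriv J1 (k * A) ^ 2) ≤ C := by
  obtain ⟨a, ha, haA, hJ⟩ := exists_J1_ne_zero hA
  have hEa : 0 < besselEnergy a := by
    have : 0 < a * J1 a ^ 2 := by positivity
    have : 0 ≤ (a * deriv J1 a + J1 a / 2) ^ 2 / a := by positivity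
    unfold besselEnergy; linarith
  set D := 3 + 1 / A ^ 2
  have hD : 0 < D := by positivity
  set m := besselEnergy a * Real.exp (-(3 / (4 * a)))
  set M := besselEnergy a * Real.exp (3 / (4 * a))
  have hm : 0 < m := mul_pos hEa (Real.exp_pos _)
  have hM : 0 < M := mul_pos hEa (Real.exp_pos _)
  refine ⟨m / (D * A), D * M / A, by positivity, by positivity, fun k hk => ?_⟩
  have hjb : jb k = |(k : ℝ)| := by
    refine max_eq_right ?_
    exact_mod_cast Int.one_le_abs hk
  have hjb1 : 1 ≤ jb k := le_max_left _ _
  -- The parities of `J₁` and `J₁'` reduce everything to the positive half-line.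
  have hsym : J1 (k * A) ^ 2 + deriv J1 (k * A) ^ 2
      = J1 (jb k * A) ^ 2 + deriv J1 (jb k * A) ^ 2 := by
    rw [hjb]
    rcases abs_choice (k : ℝ) with h | h
    · rw [h]
    · rw [h, neg_mul, J1_neg, deriv_J1_neg, neg_sq]
  rw [hsym]
  have hθ : A ≤ jb k * A := le_mul_of_one_le_left hA.le hjb1
  obtain ⟨b1, b2⟩ := besselEnergy_bounds ha (haA.le.trans hθ)
  obtain ⟨e1, e2⟩ := energy_comparable hA hθ
  set S := J1 (jb k * A) ^ 2 + deriv J1 (jb k * A) ^ 2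
  constructor
  · rw [div_le_iff₀ (by positivity)]
    calc m ≤ D * (jb k * A * S) := b1.trans e2
      _ = jb k * S * (D * A) := by ring
  · rw [le_div_iff₀ hA]
    calc jb k * S * A = jb k * A * S := by ring
      _ ≤ D * M := e1.trans (by gcongr)

/-! ### Operators on weighted sequences -/

lemma jb_pos (j : ℤ) : 0 < jb j := lt_of_lt_of_le one_pos (le_max_left _ _)

/-- A pointwise bound on weighted Fourier coefficients gives membership in the weighted `ℓ²` space
together with the bound on the norm. -/
lemma seq_bound {s t K : ℝ} (hK : 0 ≤ K) {d a b : ℤ → ℂ} (ha : memSeq t a) (hb : memSeq t b)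
    (h : ∀ j, jb j ^ (2 * s) * ‖d j‖ ^ 2
      ≤ K ^ 2 * (jb j ^ (2 * t) * (‖a j‖ ^ 2 + ‖b j‖ ^ 2))) :
    memSeq s d ∧ seqNorm s d ≤ K * (seqNorm t a + seqNorm t b) := by
  have hnn : ∀ (r : ℝ) (c : ℤ → ℂ) (j : ℤ), 0 ≤ jb j ^ (2 * r) * ‖c j‖ ^ 2 := fun r c j =>
    mul_nonneg (Real.rpow_nonneg (jb_pos j).le _) (sq_nonneg _)
  have hsum : Summable fun j => K ^ 2 * (jb j ^ (2 * t) * ‖a j‖ ^ 2 + jb j ^ (2 * t) * ‖b j‖ ^ 2) :=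
    (Summable.add ha hb).mul_left _
  have h' : ∀ j, jb j ^ (2 * s) * ‖d j‖ ^ 2
      ≤ K ^ 2 * (jb j ^ (2 * t) * ‖a j‖ ^ 2 + jb j ^ (2 * t) * ‖b j‖ ^ 2) := fun j => by
    rw [← mul_add]; exact h j
  have hd : memSeq s d := Summable.of_nonneg_of_le (hnn s d) h' hsum
  refine ⟨hd, ?_⟩
  have hle := Summable.tsum_le_tsum h' hd hsum
  rw [tsum_mul_left, Summable.tsum_add ha hb] at hle
  unfold seqNorm
  set X := ∑' j, jb j ^ (2 * t) * ‖a j‖ ^ 2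
  set Y := ∑' j, jb j ^ (2 * t) * ‖b j‖ ^ 2
  have hX : 0 ≤ X := tsum_nonneg (hnn t a)
  have hY : 0 ≤ Y := tsum_nonneg (hnn t b)
  refine Real.sqrt_le_iff.2 ⟨by positivity, hle.trans ?_⟩
  rw [mul_pow]
  gcongr
  nlinarith [Real.sq_sqrt hX, Real.sq_sqrt hY, Real.sqrt_nonneg X, Real.sqrt_nonneg Y,
    mul_nonneg (Real.sqrt_nonneg X) (Real.sqrt_nonneg Y)]

/-- A Fourier multiplier of order `1 / 2` loses half a derivative. -/
lemma multiplier_bound {s K : ℝ} (hK : 0 ≤ K) {d γ : ℤ → ℂ} (hγ : memSeq (s + 1 / 2) γ)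
    (h : ∀ j, ‖d j‖ ^ 2 ≤ K ^ 2 * (jb j * ‖γ j‖ ^ 2)) :
    memSeq s d ∧ seqNorm s d ≤ K * seqNorm (s + 1 / 2) γ := by
  have h0 : memSeq (s + 1 / 2) (fun _ => 0) := by
    simp [memSeq, summable_zero]
  have := seq_bound (s := s) hK hγ h0 (d := d) fun j => by
    have e : jb j ^ (2 * (s + 1 / 2)) = jb j ^ (2 * s) * jb j := by
      rw [show 2 * (s + 1 / 2) = 2 * s + 1 by ring, Real.rpow_add_one (jb_pos j).ne']
    rw [e, norm_zero]
    calc jb j ^ (2 * s) * ‖d j‖ ^ 2 ≤ jb j ^ (2 * s) * (K ^ 2 * (jb j * ‖γ j‖ ^ 2)) :=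
          mul_le_mul_of_nonneg_left (h j) (Real.rpow_nonneg (jb_pos j).le _)
      _ = K ^ 2 * (jb j ^ (2 * s) * jb j * (‖γ j‖ ^ 2 + 0 ^ 2)) := by ring
  simpa [seqNorm] using this

lemma dS0_bound {A C : ℝ} (hC : 0 < C) (hb : ∀ k : ℤ, k ≠ 0 →
      jb k * (J1 (k * A) ^ 2 + deriv J1 (k * A) ^ 2) ≤ C) (s : ℝ) {α β : ℤ → ℂ}
    (hα : memSeq (s - 1 / 2) α) (hβ : memSeq (s - 1 / 2) β) :
    memSeq s (dS0 A α β) ∧ seqNorm s (dS0 A α β)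
      ≤ 2 * π * √C * (seqNorm (s - 1 / 2) α + seqNorm (s - 1 / 2) β) := by
  have hπ := Real.pi_pos
  refine seq_bound (by positivity) hα hβ fun k => ?_
  have hw : 0 ≤ jb k ^ (2 * (s - 1 / 2)) := Real.rpow_nonneg (jb_pos k).le _
  by_cases hk : k = 0
  · simp only [dS0, if_pos hk, norm_zero]
    have : 0 ≤ (2 * π * √C) ^ 2 * (jb k ^ (2 * (s - 1 / 2)) * (‖α k‖ ^ 2 + ‖β k‖ ^ 2)) := by
      positivity
    simpa using this
  · have e : jb k ^ (2 * s) = jb k ^ (2 * (s - 1 / 2)) * jb k := by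
      rw [← Real.rpow_add_one (jb_pos k).ne']; congr 1; ring
    have hbk := hb k hk
    set y := J1 (k * A) with hy
    set p := deriv J1 (k * A) with hp
    have hn : ‖dS0 A α β k‖ ≤ 2 * π * (|p| * ‖α k‖ + |y| * ‖β k‖) := by
      simp only [dS0, if_neg hk, ← hy, ← hp]
      rw [norm_mul]
      have h1 : ‖2 * (π : ℂ)‖ = 2 * π := by simp [abs_of_pos hπ]
      rw [h1]
      gcongr
      refine (norm_sub_le _ _).trans_eq ?_
      simp
    have hcs : (|p| * ‖α k‖ + |y| * ‖β k‖) ^ 2 ≤ (y ^ 2 + p ^ 2) * (‖α k‖ ^ 2 + ‖β k‖ ^ 2) := by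
      nlinarith [sq_nonneg (|p| * ‖β k‖ - |y| * ‖α k‖), sq_abs p, sq_abs y]
    have hn2 : ‖dS0 A α β k‖ ^ 2
        ≤ (2 * π) ^ 2 * ((y ^ 2 + p ^ 2) * (‖α k‖ ^ 2 + ‖β k‖ ^ 2)) := by
      calc ‖dS0 A α β k‖ ^ 2 ≤ (2 * π * (|p| * ‖α k‖ + |y| * ‖β k‖)) ^ 2 := by gcongr
        _ = (2 * π) ^ 2 * (|p| * ‖α k‖ + |y| * ‖β k‖) ^ 2 := by ring
        _ ≤ _ := by gcongr
    have hjb := jb_pos k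
    rw [e, mul_pow (2 * π), Real.sq_sqrt hC.le]
    set W := jb k ^ (2 * (s - 1 / 2))
    set N := ‖α k‖ ^ 2 + ‖β k‖ ^ 2 with hN
    have hN0 : 0 ≤ N := by positivity
    calc W * jb k * ‖dS0 A α β k‖ ^ 2
        ≤ W * jb k * ((2 * π) ^ 2 * ((y ^ 2 + p ^ 2) * N)) := by gcongr
      _ = (2 * π) ^ 2 * (jb k * (y ^ 2 + p ^ 2)) * (W * N) := by ring
      _ ≤ (2 * π) ^ 2 * C * (W * N) := by gcongr

/-- Bound on the symbol of `R(0,0)`: here `T = J₁² + J₁'²`, `r` is one of `J₁`, `J₁'`, and `w = jb k`. -/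
lemma sq_quotient_le {c w r T : ℝ} (hc : 0 < c) (hw : 0 < w) (hr : r ^ 2 ≤ T) (hT : c ≤ w * T) :
    (r / T) ^ 2 ≤ w / c := by
  have hT0 : 0 < T := (mul_pos_iff_of_pos_left hw).1 (hc.trans_le hT)
  rw [div_pow, div_le_div_iff₀ (by positivity) hc]
  nlinarith [mul_le_mul_of_nonneg_right hT hT0.le, mul_le_mul_of_nonneg_right hr hc.le]

lemma R0_bound {A c : ℝ} (hc : 0 < c) (hb : ∀ k : ℤ, k ≠ 0 →
      c ≤ jb k * (J1 (k * A) ^ 2 + deriv J1 (k * A) ^ 2)) (s : ℝ) {γ : ℤ → ℂ}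
    (hγ : memSeq (s + 1 / 2) γ) :
    (memSeq s (R0 A γ).1 ∧ seqNorm s (R0 A γ).1 ≤ (√c)⁻¹ * seqNorm (s + 1 / 2) γ) ∧
      (memSeq s (R0 A γ).2 ∧ seqNorm s (R0 A γ).2 ≤ (√c)⁻¹ * seqNorm (s + 1 / 2) γ) := by
  have hK : ((√c)⁻¹) ^ 2 = c⁻¹ := by rw [inv_pow, Real.sq_sqrt hc.le]
  -- The factor `1 / (2π)` is simply bounded by `1`.
  have h2π : (1 / (2 * π)) ^ 2 ≤ 1 := by
    have := Real.pi_gt_three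
    refine pow_le_one₀ (by positivity) ?_
    rw [div_le_one (by positivity)]
    linarith
  have hn2π : ‖1 / (2 * (π : ℂ))‖ = 1 / (2 * π) := by simp [abs_of_pos Real.pi_pos]
  have main : ∀ (k : ℤ) (q : ℝ), q ^ 2 ≤ jb k / c →
      (1 / (2 * π) * |q| * ‖γ k‖) ^ 2 ≤ c⁻¹ * (jb k * ‖γ k‖ ^ 2) := by
    intro k q hq
    calc (1 / (2 * π) * |q| * ‖γ k‖) ^ 2 = (1 / (2 * π)) ^ 2 * (q ^ 2 * ‖γ k‖ ^ 2) := by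
          rw [mul_pow, mul_pow, sq_abs]; ring
      _ ≤ 1 * (jb k / c * ‖γ k‖ ^ 2) := by gcongr
      _ = c⁻¹ * (jb k * ‖γ k‖ ^ 2) := by ring
  have hz : ∀ k, 0 ≤ c⁻¹ * (jb k * ‖γ k‖ ^ 2) := fun k => by
    have := jb_pos k
    positivity
  constructor
  · refine multiplier_bound (by positivity) hγ fun k => ?_
    rw [hK]
    by_cases hk : k = 0
    · simpa [R0, hk] using hz 0
    · simp only [R0, if_neg hk]
      rw [norm_mul, norm_mul, hn2π, Complex.norm_real, Real.norm_eq_abs]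
      exact main k _ (sq_quotient_le hc (jb_pos k) (by nlinarith [sq_nonneg (J1 (k * A))]) (hb k hk))
  · refine multiplier_bound (by positivity) hγ fun k => ?_
    rw [hK]
    by_cases hk : k = 0
    · simpa [R0, hk] using hz 0
    · simp only [R0, if_neg hk]
      rw [norm_mul, norm_mul, norm_mul, Complex.norm_I, one_mul, hn2π, Complex.norm_real,
        Real.norm_eq_abs]
      exact main k _
        (sq_quotient_le hc (jb_pos k) (by nlinarith [sq_nonneg (deriv J1 (k * A))]) (hb k hk))

lemma dS0_R0 {A : ℝ} (hb : ∀ k : ℤ, k ≠ 0 → 0 < J1 (k * A) ^ 2 + deriv J1 (k * A) ^ 2)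
    {γ : ℤ → ℂ} (hγ : γ 0 = 0) (k : ℤ) : dS0 A (R0 A γ).1 (R0 A γ).2 k = γ k := by
  by_cases hk : k = 0
  · simp [dS0, hk, hγ]
  · have hT := (hb k hk).ne'
    simp only [dS0, R0, if_neg hk]
    set y := J1 (k * A)
    set p := deriv J1 (k * A)
    have hT' : (y : ℂ) ^ 2 + (p : ℂ) ^ 2 ≠ 0 := by exact_mod_cast hT
    have hπ : (π : ℂ) ≠ 0 := by exact_mod_cast Real.pi_ne_zero
    push_cast
    field_simp
    linear_combination (-(y : ℂ) ^ 2 * γ k) * Complex.I_sq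

/-- boundedness of dS(0,0), description of its kernel, and its explicit
bounded right inverse R(0,0). -/
theorem statement13 (Astar : ℝ) (hAstar : 0 < Astar) :
    (∀ s : ℝ, ∃ C : ℝ, 0 < C ∧ ∀ α β : ℤ → ℂ,
      memSeq (s - 1 / 2) α → memSeq (s - 1 / 2) β →
        memSeq s (dS0 Astar α β) ∧
        seqNorm s (dS0 Astar α β) ≤ C * (seqNorm (s - 1 / 2) α + seqNorm (s - 1 / 2) β)) ∧
    (∀ α β : ℤ → ℂ,
      (∀ k : ℤ, dS0 Astar α β k = 0) ↔
        (∀ k : ℤ, k ≠ 0 →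
          ((deriv J1 ((k : ℝ) * Astar) : ℝ) : ℂ) * α k
            - Complex.I * ((J1 ((k : ℝ) * Astar) : ℝ) : ℂ) * β k = 0)) ∧
    (∀ s : ℝ, ∃ C : ℝ, 0 < C ∧ ∀ γ : ℤ → ℂ, γ 0 = 0 → memSeq (s + 1 / 2) γ →
      memSeq s (R0 Astar γ).1 ∧ memSeq s (R0 Astar γ).2 ∧
      seqNorm s (R0 Astar γ).1 + seqNorm s (R0 Astar γ).2 ≤ C * seqNorm (s + 1 / 2) γ ∧
      (∀ k : ℤ, dS0 Astar (R0 Astar γ).1 (R0 Astar γ).2 k = γ k)) := by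
  obtain ⟨c, C, hc, hC, hb⟩ := J1_lattice_bounds hAstar
  have hπ := Real.pi_pos
  refine ⟨fun s => ⟨2 * π * √C, by positivity, fun α β hα hβ =>
      dS0_bound hC (fun k hk => (hb k hk).2) s hα hβ⟩, fun α β => ?_,
    fun s => ⟨2 * (√c)⁻¹, by positivity, fun γ hγ0 hγ => ?_⟩⟩
  · refine forall_congr' fun k => ?_
    by_cases hk : k = 0
    · simp [dS0, hk]
    · simp [dS0, hk, Real.pi_ne_zero]
  · obtain ⟨⟨m1, n1⟩, m2, n2⟩ := R0_bound hc (fun k hk => (hb k hk).1) s hγ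
    refine ⟨m1, m2, by linarith, dS0_R0 (fun k hk => ?_) hγ0⟩
    exact (mul_pos_iff_of_pos_left (jb_pos k)).1 (hc.trans_le (hb k hk).1)
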